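/- Let V be a b-complete semimodule over a b-complete idempotent semiring K, let Δ(V) be the set of δ-functionals on V, let i_Δ : V → K(Δ(V)) be the map (i_Δ(v))(φ) = φ(v), and let Id denote the identity map on the functional semimodule i_Δ(V). Then the identity operator id : V → V is b-nuclear if and only if i_Δ is an embedding (injective and an isomorphism onto its image i_Δ(V)) and the operator Id : i_Δ(V) → i_Δ(V) is integral. -/

import Mathlib

/-
Common definitions: b-complete idempotent semirings, b-complete idempotent
semimodules, functional semimodules, b-linear / integral / one-dimensional /
b-nuclear maps, δ-functionals, kernel theorems.
-/

open Set

universe u v w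

section Defs

variable {K : Type*} [IdemSemiring K] {X Y : Type*}

/-- `K` is a b-complete idempotent semiring: every nonempty bounded-above subset of `K`
has a least upper bound, and multiplication on either side distributes over suprema of
nonempty bounded-above subsets. -/
structure IsBCompleteSemiring (K : Type*) [IdemSemiring K] : Prop where
  exists_lub : ∀ s : Set K, s.Nonempty → BddAbove s → ∃ a, IsLUB s a
  mul_left_lub : ∀ (c : K) (s : Set K) (a : K), s.Nonempty → IsLUB s a →
    IsLUB ((fun x => c * x) '' s) (c * a)
  mul_right_lub : ∀ (c : K) (s : Set K) (a : K), s.Nonempty → IsLUB s a →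
    IsLUB ((fun x => x * c) '' s) (a * c)

/-- `a` is the supremum of `S` computed *inside* the subset `V` of an ordered type:
`a` lies in `V`, `a` is an upper bound of `S`, and `a` is below every upper bound of `S`
that lies in `V`. -/
def IsLUBWithin {α : Type*} [Preorder α] (V S : Set α) (a : α) : Prop :=
  a ∈ V ∧ a ∈ upperBounds S ∧ ∀ b ∈ V, b ∈ upperBounds S → a ≤ b

/-- A functional semimodule on `X`: a subset of `K(X)` invariant under multiplication by
scalars from `K` which is an upper semilattice in the induced (pointwise) order; its
addition is `f ⊕ g = sup {f, g}`, the supremum being taken inside `V`. -/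
structure IsFunctionalSemimodule (V : Set (X → K)) : Prop where
  smul_mem : ∀ (c : K), ∀ f ∈ V, c • f ∈ V
  pair_lub : ∀ f ∈ V, ∀ g ∈ V, ∃ h, IsLUBWithin V {f, g} h

/-- A b-complete functional semimodule on `X`: every nonempty subset bounded above (by an
element of `V`) has a supremum in `V`; scalar multiplication by a fixed `c ∈ K` preserves
such suprema; and for fixed `f ∈ V` the map `c ↦ c • f` sends suprema of nonempty
bounded-above subsets of `K` to suprema of their images. -/
structure IsBCompleteFunctionalSemimodule (V : Set (X → K)) extends
    IsFunctionalSemimodule V : Prop where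
  exists_lub : ∀ S ⊆ V, S.Nonempty → (∃ b ∈ V, b ∈ upperBounds S) → ∃ a, IsLUBWithin V S a
  smul_lub : ∀ (c : K) (S : Set (X → K)) (a : X → K), S ⊆ V → S.Nonempty →
    IsLUBWithin V S a → IsLUBWithin V ((fun f => c • f) '' S) (c • a)
  act_lub : ∀ f ∈ V, ∀ (s : Set K) (a : K), s.Nonempty → BddAbove s → IsLUB s a →
    IsLUBWithin V ((fun c => c • f) '' s) (a • f)

/-- `V` is a b-subsemimodule of `K(X)`: the embedding `V → K(X)` preserves sums
(the sum in `V` of `f, g ∈ V`, i.e. the supremum of `{f, g}` taken inside `V`, is the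
pointwise sum `f + g`) and preserves suprema of nonempty bounded-above subsets
(suprema taken inside `V` are suprema in `K(X)`). -/
structure IsBSubsemimodule (V : Set (X → K)) : Prop where
  add_eq : ∀ f ∈ V, ∀ g ∈ V, ∀ h, IsLUBWithin V {f, g} h → h = f + g
  lub_preserved : ∀ S ⊆ V, S.Nonempty → ∀ a, IsLUBWithin V S a → IsLUB S a

/-- A functional ∧-semimodule: a functional semimodule containing the zero function and
closed under pointwise infima (computed in `K(X)`) of arbitrary nonempty subsets. -/
structure IsFunctionalWedgeSemimodule (V : Set (X → K)) extends
    IsFunctionalSemimodule V : Prop where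
  zero_mem : (0 : X → K) ∈ V
  inf_mem : ∀ S ⊆ V, S.Nonempty → ∀ g : X → K,
    (∀ x : X, IsGLB ((fun f => f x) '' S) (g x)) → g ∈ V

/-- `V ⊆ K(X)` is non-degenerate: at every point some member of `V` takes the value `1`. -/
def IsNonDegenerate (V : Set (X → K)) : Prop :=
  ∀ x : X, ∃ g ∈ V, g x = 1

/-- `V ⊆ K(X)` is admissible: for every `f ∈ V` and `x ∈ X` there is `g ∈ V` with
`g x = 1` and `f x • g ≤ f`. -/
def IsAdmissible (V : Set (X → K)) : Prop :=
  ∀ f ∈ V, ∀ x : X, ∃ g ∈ V, g x = 1 ∧ f x • g ≤ f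

/-- An (abstract) b-complete idempotent semimodule over `K`: the partial order is the
canonical one (`x ≤ y ↔ x + y = y`, which forces addition to be idempotent), every
nonempty bounded-above subset has a least upper bound, scalar multiplication by a fixed
`c ∈ K` preserves such suprema, and for fixed `w` the map `c ↦ c • w` sends suprema of
nonempty bounded-above subsets of `K` to suprema of their images. -/
structure IsBCompleteSemimodule (K W : Type*) [IdemSemiring K] [AddCommMonoid W]
    [PartialOrder W] [Module K W] : Prop where
  le_iff_add : ∀ x y : W, x ≤ y ↔ x + y = y
  exists_lub : ∀ s : Set W, s.Nonempty → BddAbove s → ∃ a, IsLUB s a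
  smul_lub : ∀ (c : K) (s : Set W) (a : W), s.Nonempty → IsLUB s a →
    IsLUB ((fun x => c • x) '' s) (c • a)
  act_lub : ∀ (w : W) (s : Set K) (a : K), s.Nonempty → BddAbove s → IsLUB s a →
    IsLUB ((fun c => c • w) '' s) (a • w)

/-- A b-linear map between (abstract) semimodules over `K`: it commutes with scalar
multiplication and sends suprema of nonempty bounded-above subsets to suprema of their
images. -/
structure IsBLinearMap (K : Type*) {V W : Type*} [IdemSemiring K]
    [AddCommMonoid V] [PartialOrder V] [Module K V]
    [AddCommMonoid W] [PartialOrder W] [Module K W] (A : V → W) : Prop where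
  map_smul : ∀ (c : K) (v : V), A (c • v) = c • A v
  map_lub : ∀ s : Set V, s.Nonempty → BddAbove s → ∀ a, IsLUB s a → IsLUB (A '' s) (A a)

/-- A one-dimensional (rank 1) map `V → W`: `v ↦ φ v • w` for a b-linear functional `φ`
and a fixed `w ∈ W`. -/
def IsOneDimMap (K : Type*) {V W : Type*} [IdemSemiring K]
    [AddCommMonoid V] [PartialOrder V] [Module K V]
    [AddCommMonoid W] [PartialOrder W] [Module K W] (g : V → W) : Prop :=
  ∃ (φ : V → K) (w : W), IsBLinearMap K φ ∧ ∀ v : V, g v = φ v • w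

/-- A b-nuclear map `V → W`: the pointwise supremum of a set `G` of one-dimensional maps
such that `{g v : g ∈ G}` is bounded above for every `v`. -/
def IsBNuclearMap (K : Type*) {V W : Type*} [IdemSemiring K]
    [AddCommMonoid V] [PartialOrder V] [Module K V]
    [AddCommMonoid W] [PartialOrder W] [Module K W] (A : V → W) : Prop :=
  ∃ G : Set (V → W), (∀ g ∈ G, IsOneDimMap K g) ∧
    ∀ v : V, BddAbove ((fun g => g v) '' G) ∧ IsLUB ((fun g => g v) '' G) (A v)

/-- A δ-functional on an (abstract) semimodule `V`: a b-linear functional `φ : V → K`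
such that `φ w • v ≤ w` for some fixed `v ∈ V` and all `w ∈ V`. -/
def IsDeltaFunctional (K : Type*) {V : Type*} [IdemSemiring K]
    [AddCommMonoid V] [PartialOrder V] [Module K V] (φ : V → K) : Prop :=
  IsBLinearMap K φ ∧ ∃ v : V, ∀ w : V, φ w • v ≤ w

/-- The set `Δ(V)` of δ-functionals on `V`, as a type. -/
def DeltaSet (K V : Type*) [IdemSemiring K]
    [AddCommMonoid V] [PartialOrder V] [Module K V] : Type _ :=
  {φ : V → K // IsDeltaFunctional K φ}

/-- The natural map `i_Δ : V → K(Δ(V))`, `(i_Δ v) φ = φ v`. -/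
def iDelta (K V : Type*) [IdemSemiring K]
    [AddCommMonoid V] [PartialOrder V] [Module K V] : V → (DeltaSet K V → K) :=
  fun v φ => φ.1 v

/-- A b-linear operator on a functional semimodule `V ⊆ K(X)` with values in an abstract
semimodule `W`: it commutes with scalar multiplication and sends suprema (taken inside
`V`) of nonempty bounded-above subsets of `V` to suprema of their images in `W`. -/
structure IsBLinearOn {K X : Type*} [IdemSemiring K] {W : Type*} [AddCommMonoid W]
    [PartialOrder W] [Module K W] (V : Set (X → K)) (A : (X → K) → W) : Prop where
  map_smul : ∀ (c : K), ∀ f ∈ V, A (c • f) = c • A f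
  map_lub : ∀ S ⊆ V, S.Nonempty → ∀ a, IsLUBWithin V S a → IsLUB (A '' S) (A a)

/-- `k : X → W` is a kernel of the operator `A` on `V ⊆ K(X)`: for every `f ∈ V` the set
`{f x • k x : x ∈ X}` is bounded above in `W` and `A f = ⊕_{x ∈ X} f x • k x`. -/
def IsKernelOf {K X : Type*} [IdemSemiring K] {W : Type*} [AddCommMonoid W]
    [PartialOrder W] [Module K W] (V : Set (X → K)) (A : (X → K) → W) (k : X → W) : Prop :=
  ∀ f ∈ V, BddAbove (Set.range fun x => f x • k x) ∧
    IsLUB (Set.range fun x => f x • k x) (A f)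

/-- `A` is an integral operator (has an integral representation): it has a kernel. -/
def IsIntegralOn {K X : Type*} [IdemSemiring K] {W : Type*} [AddCommMonoid W]
    [PartialOrder W] [Module K W] (V : Set (X → K)) (A : (X → K) → W) : Prop :=
  ∃ k : X → W, IsKernelOf V A k

/-- One-dimensional map from a functional semimodule `V ⊆ K(X)` to `W`. -/
def IsOneDimOn {K X : Type*} [IdemSemiring K] {W : Type*} [AddCommMonoid W]
    [PartialOrder W] [Module K W] (V : Set (X → K)) (g : (X → K) → W) : Prop :=
  ∃ (φ : (X → K) → K) (w : W), IsBLinearOn V φ ∧ ∀ f ∈ V, g f = φ f • w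

/-- b-nuclear map from a functional semimodule `V ⊆ K(X)` to `W`: the (pointwise on `V`)
supremum of a set of one-dimensional maps, bounded above at every `f ∈ V`. -/
def IsBNuclearOn {K X : Type*} [IdemSemiring K] {W : Type*} [AddCommMonoid W]
    [PartialOrder W] [Module K W] (V : Set (X → K)) (A : (X → K) → W) : Prop :=
  ∃ G : Set ((X → K) → W), (∀ g ∈ G, IsOneDimOn V g) ∧
    ∀ f ∈ V, BddAbove ((fun g => g f) '' G) ∧ IsLUB ((fun g => g f) '' G) (A f)

/-- One-dimensional operator from the functional semimodule `V ⊆ K(X)` to itself. -/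
def IsOneDimSelf {K X : Type*} [IdemSemiring K] (V : Set (X → K))
    (g : (X → K) → (X → K)) : Prop :=
  ∃ (φ : (X → K) → K) (w : X → K), IsBLinearOn V φ ∧ w ∈ V ∧ ∀ f ∈ V, g f = φ f • w

/-- b-nuclear operator from the functional semimodule `V ⊆ K(X)` to itself (the suprema
being taken inside `V`). -/
def IsBNuclearSelf {K X : Type*} [IdemSemiring K] (V : Set (X → K))
    (A : (X → K) → (X → K)) : Prop :=
  ∃ G : Set ((X → K) → (X → K)), (∀ g ∈ G, IsOneDimSelf V g) ∧
    ∀ f ∈ V, IsLUBWithin V ((fun g => g f) '' G) (A f)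

/-- Integral operator from the functional semimodule `V ⊆ K(X)` to itself: it has a
kernel `k : X → V`, the suprema being taken inside `V`. -/
def IsIntegralSelf {K X : Type*} [IdemSemiring K] (V : Set (X → K))
    (A : (X → K) → (X → K)) : Prop :=
  ∃ k : X → (X → K), (∀ x : X, k x ∈ V) ∧
    ∀ f ∈ V, IsLUBWithin V (Set.range fun x => f x • k x) (A f)

/-- The kernel theorem holds in `V ⊆ K(X)`: every b-linear map from `V` to an arbitrary
b-complete semimodule over `K` has an integral representation. -/
def KernelTheoremHolds {K X : Type*} [IdemSemiring K] (V : Set (X → K)) : Prop :=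
  ∀ (W : Type w) [AddCommMonoid W] [PartialOrder W] [Module K W],
    IsBCompleteSemimodule K W → ∀ A : (X → K) → W, IsBLinearOn V A → IsIntegralOn V A

/-- A b-linear operator between functional semimodules `V ⊆ K(X)` and `W ⊆ K(Y)`. -/
structure IsBLinearBetween (V : Set (X → K)) (W : Set (Y → K))
    (A : (X → K) → (Y → K)) : Prop where
  maps_to : ∀ f ∈ V, A f ∈ W
  map_smul : ∀ (c : K), ∀ f ∈ V, A (c • f) = c • A f
  map_lub : ∀ S ⊆ V, S.Nonempty → ∀ a, IsLUBWithin V S a → IsLUBWithin W (A '' S) (A a)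

/-- δ-functionals on a functional semimodule `V ⊆ K(X)`. -/
def IsDeltaOn {K X : Type*} [IdemSemiring K] (V : Set (X → K)) (φ : (X → K) → K) : Prop :=
  IsBLinearOn V φ ∧ ∃ v ∈ V, ∀ w ∈ V, φ w • v ≤ w

/-- The set `Δ(V)` of δ-functionals on the functional semimodule `V ⊆ K(X)`, as a type. -/
def DeltaOn {K X : Type*} [IdemSemiring K] (V : Set (X → K)) : Type _ :=
  {φ : (X → K) → K // IsDeltaOn V φ}

/-- The natural map `i_Δ : V → K(Δ(V))` for a functional semimodule `V ⊆ K(X)`. -/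
def iDeltaOn {K X : Type*} [IdemSemiring K] (V : Set (X → K)) :
    (X → K) → (DeltaOn V → K) :=
  fun f φ => φ.1 f

end Defs

section Comb

open Cardinal

theorem inj_choice {T Φ : Type w} (γ : T → Ordinal.{w}) (pl : T → Set Φ)
    (h : ∀ t, #{t' : T | γ t' ≤ γ t} < #(pl t)) :
    ∃ c : T → Φ, Function.Injective c ∧ ∀ t, c t ∈ pl t := by
  classical
  let r : T → T → Prop := fun a b => Prod.Lex (· < ·) WellOrderingRel (γ a, a) (γ b, b)
  have wf : WellFounded r :=
    InvImage.wf (fun a : T => (γ a, a)) (WellFounded.prod_lex Ordinal.lt_wf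
      (IsWellFounded.wf (r := (WellOrderingRel : T → T → Prop))))
  have rle : ∀ a b, r a b → γ a ≤ γ b := by
    intro a b hab
    rcases Prod.lex_def.1 hab with h1 | h1
    · exact le_of_lt h1
    · exact le_of_eq h1.1
  have tri : ∀ a b, a ≠ b → r a b ∨ r b a := by
    intro a b hab
    rcases lt_trichotomy (γ a) (γ b) with h1 | h1 | h1
    · exact Or.inl (Prod.lex_def.2 (Or.inl h1))
    · rcases trichotomous_of (WellOrderingRel : T → T → Prop) a b with h2 | h2 | h2
      · exact Or.inl (Prod.lex_def.2 (Or.inr ⟨h1, h2⟩))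
      · exact absurd h2 hab
      · exact Or.inr (Prod.lex_def.2 (Or.inr ⟨h1.symm, h2⟩))
    · exact Or.inr (Prod.lex_def.2 (Or.inl h1))
  have key : ∀ (t : T) (ih : ∀ t', r t' t → Φ), ∃ x, x ∈ pl t ∧ ∀ t' (h' : r t' t), ih t' h' ≠ x := by
    intro t ih
    by_contra hcon
    push Not at hcon
    have hsub : pl t ⊆ Set.range (fun p : {t' // r t' t} => ih p.1 p.2) := by
      intro x hx
      obtain ⟨t', h', e⟩ := hcon x hx
      exact ⟨⟨t', h'⟩, e⟩
    have h1 : #(pl t) ≤ #{t' // r t' t} := (mk_le_mk_of_subset hsub).trans mk_range_le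
    have h2 : #{t' // r t' t} ≤ #{t' : T | γ t' ≤ γ t} :=
      mk_le_mk_of_subset (s := {t' | r t' t}) (t := {t' : T | γ t' ≤ γ t}) (fun x hx => rle _ _ hx)
    exact absurd (h t) (not_lt.2 (h1.trans h2))
  let c : T → Φ := wf.fix (fun t ih => Classical.choose (key t ih))
  have hc : ∀ t, c t ∈ pl t ∧ ∀ t', r t' t → c t' ≠ c t := by
    intro t
    have e : c t = Classical.choose (key t (fun t' _ => c t')) := wf.fix_eq _ t
    have := Classical.choose_spec (key t (fun t' _ => c t'))
    rw [← e] at this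
    exact this
  refine ⟨c, ?_, fun t => (hc t).1⟩
  intro a b hab
  by_contra hne
  rcases tri a b hne with h1 | h1
  · exact (hc b).2 a h1 hab
  · exact (hc a).2 b h1 hab.symm

theorem enum_exists {S : Type w} (X : Set S) :
    ∃ f : S → Ordinal.{w}, Set.InjOn f X ∧ ∀ x ∈ X, f x < (#X).ord := by
  classical
  obtain ⟨r, hr, e⟩ := Cardinal.ord_eq X
  refine ⟨fun s => if h : s ∈ X then Ordinal.typein r ⟨s, h⟩ else 0, ?_, ?_⟩
  · intro a ha b hb hab
    simp only [ha, hb, dif_pos] at hab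
    have := Ordinal.typein_injective r hab
    exact congrArg Subtype.val this
  · intro x hx
    simp only [hx, dif_pos]
    rw [e]
    exact Ordinal.typein_lt_type r _

/-- kappa -/
noncomputable def kap (α : Ordinal.{w}) : Cardinal.{w} := max α.card ℵ₀

theorem kap_mono {α β : Ordinal.{w}} (h : α ≤ β) : kap α ≤ kap β :=
  max_le_max (Ordinal.card_le_card h) le_rfl

theorem aleph0_le_kap (α : Ordinal.{w}) : ℵ₀ ≤ kap α := le_max_right _ _

theorem count_le {S : Type w} (X : Set S) (f : S → Ordinal.{w}) (hf : Set.InjOn f X)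
    (α : Ordinal.{w}) (h : ∀ x ∈ X, f x ≤ α) : #X ≤ kap α := by
  have h1 := mk_image_eq_of_injOn_lift f X hf
  have h2 : f '' X ⊆ Set.Iio (Order.succ α) := by
    rintro _ ⟨x, hx, rfl⟩
    exact Order.lt_succ_of_le (h x hx)
  have h3 := mk_le_mk_of_subset h2
  rw [mk_Iio_ordinal, ← lift_id'.{w, w+1} #(f '' X), h1] at h3
  have h4 := lift_le.1 h3
  refine h4.trans ?_
  rw [Ordinal.card_succ]
  exact add_le_of_le (aleph0_le_kap α) (le_max_left _ _) (one_le_aleph0.trans (aleph0_le_kap α))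

theorem biUnion_le {S T : Type w} (X : Set S) (A : S → Set T) (c : Cardinal.{w}) (hc : ℵ₀ ≤ c)
    (hX : #X ≤ c) (hA : ∀ x ∈ X, #(A x) ≤ c) : #(⋃ x ∈ X, A x : Set T) ≤ c := by
  refine (mk_biUnion_le A X).trans ?_
  refine (mul_le_mul' hX (ciSup_le' (a := c) fun x : X => hA x.1 x.2)).trans ?_
  exact (mul_eq_self hc).le

variable {Φ S : Type w}

/-- viability -/
def Viable (lead : S → Φ) (M : Φ → Set S) (pool : Φ → S → Set Φ) (move : S → Φ → S)
    (A : Set S) : Prop :=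
  ∀ m ∈ A, ∃ m' ∈ M (lead m), m' ∈ A ∧ ∀ g ∈ pool (lead m) m', move m g ∈ A

theorem tasks_lemma (lead : S → Φ) (pool : Φ → S → Set Φ) (move : S → Φ → S)
    (hlead : ∀ m g, lead (move m g) = g) (B : Set S) (Q : Set (S × S)) (γ : S × S → Ordinal.{w})
    (hγ : ∀ t ∈ Q, #{t' ∈ Q | γ t' ≤ γ t} < #(pool (lead t.1) t.2))
    (hB : ∀ t ∈ Q, ∀ g ∈ pool (lead t.1) t.2, move t.1 g ∈ B) :
    ∃ D ⊆ B, (∀ φ, {m ∈ D | lead m = φ}.Finite) ∧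
      ∀ t ∈ Q, ∃ g ∈ pool (lead t.1) t.2, move t.1 g ∈ D := by
  obtain ⟨c, hc, hc'⟩ := inj_choice (T := Q) (fun t => γ t.1) (fun t => pool (lead t.1.1) t.1.2) (by
    intro t
    refine lt_of_le_of_lt ?_ (hγ t.1 t.2)
    refine mk_le_of_injective (f := fun x : {t' : Q | γ t'.1 ≤ γ t.1} =>
      (⟨x.1.1, x.1.2, x.2⟩ : {t' | t' ∈ Q ∧ γ t' ≤ γ t.1})) ?_
    intro x y hxy
    apply Subtype.ext
    apply Subtype.ext
    simpa using hxy)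
  refine ⟨Set.range (fun t : Q => move t.1.1 (c t)), ?_, ?_, ?_⟩
  · rintro _ ⟨t, rfl⟩
    exact hB t.1 t.2 _ (hc' t)
  · intro φ
    apply Set.Subsingleton.finite
    rintro _ ⟨⟨t, rfl⟩, h1⟩ _ ⟨⟨t', rfl⟩, h2⟩
    simp only [hlead] at h1 h2
    rw [hc (h1.trans h2.symm)]
  · intro t ht
    exact ⟨c ⟨t, ht⟩, hc' ⟨t, ht⟩, ⟨⟨t, ht⟩, rfl⟩⟩

theorem comb_base (lead : S → Φ) (M : Φ → Set S) (pool : Φ → S → Set Φ) (move : S → Φ → S)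
    (hlead : ∀ m g, lead (move m g) = g)
    (hp1 : ∀ χ, (M χ).Infinite → ∀ m ∈ M χ, #(M χ) ≤ #(pool χ m))
    (B : Set S) (hBc : B.Countable) :
    ∃ D ⊆ B, (∀ φ, {m ∈ D | lead m = φ}.Finite) ∧
      ∀ A ⊆ B, A.Nonempty → Viable lead M pool move A → (A ∩ D).Nonempty := by
  classical
  let Q : Set (S × S) := {t | t.1 ∈ B ∧ t.2 ∈ B ∧ (M (lead t.1)).Infinite ∧ t.2 ∈ M (lead t.1) ∧
    ∀ g ∈ pool (lead t.1) t.2, move t.1 g ∈ B}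
  have hQc : Q.Countable := (Set.Countable.prod hBc hBc).mono (fun t ht => Set.mk_mem_prod ht.1 ht.2.1)
  obtain ⟨e, he⟩ := Set.countable_iff_exists_injOn.1 hQc
  obtain ⟨D1, hD1, hD1f, hD1h⟩ := tasks_lemma lead pool move hlead B Q (fun t => (e t : Ordinal.{w})) (by
    intro t ht
    have h1 : ℵ₀ ≤ #(pool (lead t.1) t.2) :=
      (infinite_iff.1 ht.2.2.1.to_subtype).trans (hp1 _ ht.2.2.1 _ ht.2.2.2.1)
    refine lt_of_lt_of_le ?_ h1
    rw [lt_aleph0_iff_set_finite]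
    refine Set.Finite.of_finite_image (f := e) ((Set.finite_Iic (e t)).subset ?_)
      (he.mono fun x hx => hx.1)
    rintro _ ⟨x, hx, rfl⟩
    exact_mod_cast hx.2) (fun t ht => ht.2.2.2.2)
  obtain ⟨N, hN⟩ := Set.countable_iff_exists_injOn.1 (hBc.image lead)
  let D2 : Set S := {m' ∈ B | ∃ χ ∈ lead '' B, (M χ).Finite ∧ m' ∈ M χ ∧ N χ ≤ N (lead m')}
  refine ⟨D1 ∪ D2, Set.union_subset hD1 (fun x hx => hx.1), ?_, ?_⟩
  · intro φ
    have hfin : {χ ∈ lead '' B | N χ ≤ N φ}.Finite := by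
      refine Set.Finite.of_finite_image (f := N) ((Set.finite_Iic (N φ)).subset ?_)
        (hN.mono fun x hx => hx.1)
      rintro _ ⟨x, hx, rfl⟩
      exact hx.2
    have h2 : (⋃ χ ∈ {χ ∈ lead '' B | N χ ≤ N φ}, (if (M χ).Finite then M χ else ∅)).Finite := by
      refine hfin.biUnion ?_
      intro χ _
      split_ifs with h
      · exact h
      · exact Set.finite_empty
    refine ((hD1f φ).union h2).subset ?_
    rintro m ⟨hm | hm, rfl⟩
    · exact Or.inl ⟨hm, rfl⟩
    · right
      obtain ⟨_, χ, h3, h4, h5, h6⟩ := hm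
      simp only [Set.mem_iUnion]
      exact ⟨χ, ⟨h3, h6⟩, by rwa [if_pos h4]⟩
  · intro A hAB hAne hV
    by_cases hinf : ∃ m ∈ A, (M (lead m)).Infinite
    · obtain ⟨m, hm, hi⟩ := hinf
      obtain ⟨m', h1, h2, h3⟩ := hV m hm
      obtain ⟨g, hg, hgD⟩ := hD1h (m, m') ⟨hAB hm, hAB h2, hi, h1, fun g hg => hAB (h3 g hg)⟩
      exact ⟨_, h3 g hg, Or.inl hgD⟩
    · push Not at hinf
      obtain ⟨m, hm, hmin⟩ := (measure (fun m => N (lead m))).wf.has_min A hAne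
      obtain ⟨m', h1, h2, h3⟩ := hV m hm
      refine ⟨m', h2, Or.inr ⟨hAB h2, lead m, ⟨m, hAB hm, rfl⟩, ?_, h1, not_lt.1 (hmin m' h2)⟩⟩
      exact hinf m hm

theorem closure_exists (X0 : Set S) (Sc : S → Set S) (c : Cardinal.{w}) (hc : ℵ₀ ≤ c)
    (hX : #X0 ≤ c) (hS : ∀ m, #(Sc m) ≤ c) :
    ∃ Y : Set S, X0 ⊆ Y ∧ #Y ≤ c ∧ ∀ m ∈ Y, Sc m ⊆ Y := by
  let X : ℕ → Set S := fun n => Nat.rec X0 (fun _ Z => ⋃ m ∈ Z, Sc m) n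
  have hXn : ∀ n : ℕ, #(↥(X n)) ≤ c := by
    intro n
    induction n with
    | zero => exact hX
    | succ n ih => exact biUnion_le (X n) Sc c hc ih (fun m _ => hS m)
  refine ⟨⋃ n, X n, Set.subset_iUnion X 0, ?_, ?_⟩
  · have h1 := mk_iUnion_le_lift X
    simp only [lift_uzero, mk_nat, lift_aleph0] at h1
    refine h1.trans ?_
    refine (mul_le_mul' (b := c) (d := c) ?_ (ciSup_le' fun n => ?_)).trans (mul_eq_self hc).le
    · simpa using hc
    · simpa using hXn n
  · intro m hm x hx
    obtain ⟨n, hn⟩ := Set.mem_iUnion.1 hm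
    refine Set.mem_iUnion.2 ⟨n + 1, ?_⟩
    exact Set.mem_biUnion hn hx

theorem comb_step (lead : S → Φ) (M : Φ → Set S) (pool : Φ → S → Set Φ) (move : S → Φ → S)
    (hlead : ∀ m g, lead (move m g) = g)
    (hp1 : ∀ χ, (M χ).Infinite → ∀ m ∈ M χ, #(M χ) ≤ #(pool χ m))
    (hp2 : ∀ χ, ∀ m ∈ M χ, #(pool χ m) ≤ #(M χ))
    (B : Set S) (hBc : ℵ₀ < #B)
    (IH : ∀ B' : Set S, #B' < #B → ∃ D ⊆ B', (∀ φ, {m ∈ D | lead m = φ}.Finite) ∧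
      ∀ A ⊆ B', A.Nonempty → Viable lead M pool move A → (A ∩ D).Nonempty) :
    ∃ D ⊆ B, (∀ φ, {m ∈ D | lead m = φ}.Finite) ∧
      ∀ A ⊆ B, A.Nonempty → Viable lead M pool move A → (A ∩ D).Nonempty := by
  classical
  obtain ⟨idx, hidx, hidx'⟩ := enum_exists B
  let Succ : S → Set S := fun m =>
    M (lead m) ∪ ⋃ m' ∈ M (lead m), move m '' pool (lead m) m'
  have hSucc : ∀ m c, ℵ₀ ≤ c → #(M (lead m)) ≤ c → #(Succ m) ≤ c := by
    intro m c hc h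
    refine (mk_union_le _ _).trans (add_le_of_le hc h ?_)
    exact biUnion_le _ _ c hc h (fun x hx => mk_image_le.trans ((hp2 _ x hx).trans h))
  let Closed : Ordinal.{w} → Set S → Prop := fun α Y =>
    {m ∈ B | idx m ≤ α} ⊆ Y ∧ ∀ m ∈ Y, #(M (lead m)) ≤ kap α → Succ m ⊆ Y
  let C : Ordinal.{w} → Set S := fun α => ⋂₀ {Y | Closed α Y}
  have hCcl : ∀ α, Closed α (C α) := by
    intro α
    refine ⟨fun m hm Y hY => hY.1 hm, ?_⟩
    intro m hm hM x hx Y hY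
    exact hY.2 m (hm Y hY) hM hx
  have hCcard : ∀ α, #(C α) ≤ kap α := by
    intro α
    obtain ⟨Y, h1, h2, h3⟩ := closure_exists {m ∈ B | idx m ≤ α}
      (fun m => if #(M (lead m)) ≤ kap α then Succ m else ∅) (kap α) (aleph0_le_kap α)
      (count_le _ idx (hidx.mono fun x hx => hx.1) α (fun x hx => hx.2)) (by
        intro m
        split_ifs with h
        · exact hSucc m _ (aleph0_le_kap α) h
        · simp)
    refine (mk_le_mk_of_subset (t := Y) ?_).trans h2
    apply Set.sInter_subset_of_mem
    refine ⟨h1, fun m hm hM => ?_⟩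
    have := h3 m hm
    rwa [if_pos hM] at this
  have hCmono : ∀ α β, α ≤ β → C α ⊆ C β := by
    intro α β hab
    apply Set.sInter_subset_of_mem
    refine ⟨fun m hm => (hCcl β).1 ⟨hm.1, hm.2.trans hab⟩, fun m hm hM => ?_⟩
    exact (hCcl β).2 m hm (hM.trans (kap_mono hab))
  let rank : S → Ordinal.{w} := fun m => sInf {α | m ∈ C α}
  have rank_le : ∀ m α, m ∈ C α → rank m ≤ α := fun m α h => csInf_le' h
  have hBC : ∀ m ∈ B, m ∈ C (idx m) := fun m hm => (hCcl _).1 ⟨hm, le_rfl⟩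
  have rank_mem : ∀ m ∈ B, m ∈ C (rank m) := fun m hm =>
    csInf_mem (s := {α | m ∈ C α}) ⟨_, hBC m hm⟩
  have rank_lt : ∀ m ∈ B, (rank m).card < #B := fun m hm =>
    lt_ord.1 (lt_of_le_of_lt (rank_le m _ (hBC m hm)) (hidx' m hm))
  let Rich : S → Prop := fun m => kap (rank m) < #(M (lead m))
  have nonrich_succ : ∀ m ∈ B, ¬ Rich m → ∀ x ∈ Succ m, rank x ≤ rank m := fun m hm hr x hx =>
    rank_le x _ ((hCcl _).2 m (rank_mem m hm) (not_lt.1 hr) hx)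
  -- rich tasks
  choose pos hpos hpos' using fun χ => enum_exists (M χ)
  let Q : Set (S × S) := {t | t.1 ∈ B ∧ Rich t.1 ∧ t.2 ∈ M (lead t.1) ∧
    ∀ g ∈ pool (lead t.1) t.2, move t.1 g ∈ B}
  let γ : S × S → Ordinal.{w} := fun t => max (rank t.1) (pos (lead t.1) t.2)
  obtain ⟨D1, hD1, hD1f, hD1h⟩ := tasks_lemma lead pool move hlead B Q γ (by
    intro t ht
    obtain ⟨htB, htr, htM, -⟩ := ht
    have hinf : (M (lead t.1)).Infinite := by
      rw [← Set.infinite_coe_iff, infinite_iff]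
      exact (aleph0_le_kap _).trans htr.le
    have h1 : kap (γ t) < #(M (lead t.1)) := by
      have h2 : (γ t).card < #(M (lead t.1)) := by
        rcases max_choice (rank t.1) (pos (lead t.1) t.2) with h | h
        · change (max _ _ : Ordinal.{w}).card < _
          rw [h]
          exact lt_of_le_of_lt (le_max_left _ _) htr
        · change (max _ _ : Ordinal.{w}).card < _
          rw [h]
          exact lt_ord.1 (hpos' _ _ htM)
      exact max_lt h2 (lt_of_le_of_lt (aleph0_le_kap _) htr)
    refine lt_of_le_of_lt ?_ (h1.trans_le (hp1 _ hinf _ htM))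
    have hsub : {t' | t' ∈ Q ∧ γ t' ≤ γ t} ⊆
        ⋃ m ∈ C (γ t), Prod.mk m '' {m' ∈ M (lead m) | pos (lead m) m' ≤ γ t} := by
      rintro ⟨m, m'⟩ ⟨⟨hm, _, hm', _⟩, hle⟩
      refine Set.mem_biUnion (hCmono _ _ ((le_max_left _ _).trans hle) (rank_mem m hm)) ?_
      exact ⟨m', ⟨hm', (le_max_right _ _).trans hle⟩, rfl⟩
    refine (mk_le_mk_of_subset hsub).trans ?_
    refine biUnion_le _ _ _ (aleph0_le_kap _) (hCcard _) (fun m _ => ?_)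
    exact mk_image_le.trans
      (count_le _ (pos (lead m)) ((hpos _).mono fun x hx => hx.1) _ fun x hx => hx.2))
    (fun t ht => ht.2.2.2)
  -- non-rich part
  let Br : Ordinal.{w} → Set S := fun r => {m | m ∈ B ∧ ¬ Rich m ∧ rank m = r ∧
    ∀ m2 ∈ B, lead m2 = lead m → ¬ Rich m2 → r ≤ rank m2}
  have hBr : ∀ r, #(Br r) < #B := by
    intro r
    by_cases hne : (Br r).Nonempty
    · obtain ⟨m, hm, _, rfl, _⟩ := hne
      refine lt_of_le_of_lt (mk_le_mk_of_subset (t := C (rank m)) ?_)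
        (lt_of_le_of_lt (hCcard _) (max_lt (rank_lt m hm) hBc))
      rintro x ⟨hx, _, e, _⟩
      rw [← e]
      exact rank_mem x hx
    · rw [Set.not_nonempty_iff_eq_empty.1 hne]
      simp only [mk_eq_zero]
      exact aleph0_pos.trans hBc
  choose D hDs hDf hDh using fun r => IH (Br r) (hBr r)
  refine ⟨D1 ∪ ⋃ r, D r, ?_, ?_, ?_⟩
  · refine Set.union_subset hD1 (Set.iUnion_subset fun r x hx => (hDs r hx).1)
  · intro φ
    have h2 : {m | m ∈ (⋃ r, D r) ∧ lead m = φ}.Finite := by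
      by_cases hne : {m | m ∈ (⋃ r, D r) ∧ lead m = φ}.Nonempty
      · obtain ⟨m0, hm0, e0⟩ := hne
        obtain ⟨r0, hr0⟩ := Set.mem_iUnion.1 hm0
        refine (hDf r0 φ).subset ?_
        rintro m ⟨hm, e⟩
        obtain ⟨r, hr⟩ := Set.mem_iUnion.1 hm
        have a0 := hDs r0 hr0
        have a := hDs r hr
        have i1 := a0.2.2.2 m a.1 (e.trans e0.symm) a.2.1
        have i2 := a.2.2.2 m0 a0.1 (e0.trans e.symm) a0.2.1
        rw [a.2.2.1] at i1
        rw [a0.2.2.1] at i2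
        have : r0 = r := le_antisymm i1 i2
        subst this
        exact ⟨hr, e⟩
      · rw [Set.not_nonempty_iff_eq_empty.1 hne]
        exact Set.finite_empty
    refine ((hD1f φ).union h2).subset ?_
    rintro m ⟨hm | hm, e⟩
    · exact Or.inl ⟨hm, e⟩
    · exact Or.inr ⟨hm, e⟩
  · intro A hAB hAne hV
    by_cases hrich : ∃ m ∈ A, Rich m
    · obtain ⟨m, hm, hr⟩ := hrich
      obtain ⟨m', h1, h2, h3⟩ := hV m hm
      obtain ⟨g, hg, hgD⟩ := hD1h (m, m') ⟨hAB hm, hr, h1, fun g hg => hAB (h3 g hg)⟩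
      exact ⟨_, h3 g hg, Or.inl hgD⟩
    · push Not at hrich
      obtain ⟨m0, hm0, hmin⟩ := (InvImage.wf rank Ordinal.lt_wf).has_min A hAne
      have hmin' : ∀ x ∈ A, rank m0 ≤ rank x := fun x hx => not_lt.1 (hmin x hx)
      obtain ⟨x, hx1, hx2⟩ := hDh (rank m0) {m | m ∈ A ∧ rank m = rank m0} (by
        rintro m ⟨hm, e⟩
        refine ⟨hAB hm, hrich m hm, e, ?_⟩
        intro m2 hm2 el hr2
        obtain ⟨m', h1, h2, h3⟩ := hV m hm
        refine (hmin' m' h2).trans (nonrich_succ m2 hm2 hr2 m' ?_)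
        left
        rw [el]
        exact h1) ⟨m0, hm0, rfl⟩ (by
        rintro m ⟨hm, e⟩
        obtain ⟨m', h1, h2, h3⟩ := hV m hm
        have key : ∀ x ∈ A, x ∈ Succ m → rank x = rank m0 := fun x hx hs =>
          le_antisymm ((nonrich_succ m (hAB hm) (hrich m hm) x hs).trans e.le) (hmin' x hx)
        refine ⟨m', h1, ⟨h2, key m' h2 (Or.inl h1)⟩, fun g hg => ⟨h3 g hg, ?_⟩⟩
        exact key _ (h3 g hg) (Or.inr (Set.mem_biUnion h1 ⟨g, hg, rfl⟩)))
      exact ⟨x, hx1.1, Or.inr (Set.mem_iUnion.2 ⟨_, hx2⟩)⟩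

theorem comb (lead : S → Φ) (M : Φ → Set S) (pool : Φ → S → Set Φ) (move : S → Φ → S)
    (hlead : ∀ m g, lead (move m g) = g)
    (hp1 : ∀ χ, (M χ).Infinite → ∀ m ∈ M χ, #(M χ) ≤ #(pool χ m))
    (hp2 : ∀ χ, ∀ m ∈ M χ, #(pool χ m) ≤ #(M χ)) (c : Cardinal.{w}) :
    ∀ B : Set S, #B = c → ∃ D ⊆ B, (∀ φ, {m ∈ D | lead m = φ}.Finite) ∧
      ∀ A ⊆ B, A.Nonempty → Viable lead M pool move A → (A ∩ D).Nonempty := by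
  induction c using WellFoundedLT.induction with
  | ind c ih =>
    rintro B rfl
    by_cases hB : ℵ₀ < #B
    · exact comb_step lead M pool move hlead hp1 hp2 B hB (fun B' h => ih _ h B' rfl)
    · exact comb_base lead M pool move hlead hp1 B (le_aleph0_iff_set_countable.1 (not_lt.1 hB))

end Comb

section Alg

open Cardinal

variable {K : Type u} [IdemSemiring K] {V : Type v} [AddCommMonoid V] [PartialOrder V] [Module K V]

theorem bs_zero_le (hV : IsBCompleteSemimodule K V) (x : V) : 0 ≤ x :=
  (hV.le_iff_add _ _).2 (zero_add x)

theorem bs_add_le (hV : IsBCompleteSemimodule K V) {x y z : V} (hx : x ≤ z) (hy : y ≤ z) :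
    x + y ≤ z := by
  rw [hV.le_iff_add] at *
  rw [add_assoc, hy, hx]

theorem bs_le_add (hV : IsBCompleteSemimodule K V) (x y : V) : x ≤ x + y := by
  have h : x + x = x := (hV.le_iff_add x x).1 le_rfl
  rw [hV.le_iff_add, ← add_assoc, h]

theorem bs_smul_mono (hV : IsBCompleteSemimodule K V) (c : K) {x y : V} (h : x ≤ y) :
    c • x ≤ c • y := by
  rw [hV.le_iff_add] at *
  rw [← smul_add, h]

theorem bs_act_mono (hV : IsBCompleteSemimodule K V) {a b : K} (x : V) (h : a ≤ b) :
    a • x ≤ b • x := by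
  rw [hV.le_iff_add, ← add_smul, add_eq_right_iff_le.2 h]

theorem bs_sum_le (hV : IsBCompleteSemimodule K V) {ι : Type*} (s : Finset ι) (f : ι → V) (u : V)
    (h : ∀ i ∈ s, f i ≤ u) : ∑ i ∈ s, f i ≤ u :=
  Finset.sum_induction f (fun x => x ≤ u) (fun _ _ => bs_add_le hV) (bs_zero_le hV u) h

theorem bs_le_sum (hV : IsBCompleteSemimodule K V) {ι : Type*} (s : Finset ι) (f : ι → V)
    {i : ι} (h : i ∈ s) : f i ≤ ∑ i ∈ s, f i := by
  classical
  rw [← Finset.add_sum_erase s f h]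
  exact bs_le_add hV _ _

theorem blin_mono {φ : V → K} (h : IsBLinearMap K φ) {a b : V} (hab : a ≤ b) : φ a ≤ φ b := by
  have h1 : IsLUB {a, b} b := by
    refine ⟨?_, fun c hc => hc (by simp)⟩
    rintro x (rfl | rfl)
    · exact hab
    · exact le_rfl
  exact (h.map_lub {a, b} ⟨a, by simp⟩ ⟨b, h1.1⟩ b h1).1 ⟨a, by simp, rfl⟩

theorem blin_mul (hK : IsBCompleteSemiring K) {φ : V → K} (h : IsBLinearMap K φ) (c : K) :
    IsBLinearMap K (fun v => φ v * c) := by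
  refine ⟨fun k v => ?_, fun s hs hb a ha => ?_⟩
  · simp only [h.map_smul, smul_eq_mul, mul_assoc]
  · have := hK.mul_right_lub c _ _ (hs.image φ) (h.map_lub s hs hb a ha)
    rwa [Set.image_image] at this

theorem blin_add {φ ψ : V → K} (h : IsBLinearMap K φ) (h' : IsBLinearMap K ψ) :
    IsBLinearMap K (fun v => φ v + ψ v) := by
  refine ⟨fun k v => ?_, fun s hs hb a ha => ⟨?_, ?_⟩⟩
  · simp only [h.map_smul, h'.map_smul, smul_eq_mul, mul_add]
  · rintro _ ⟨x, hx, rfl⟩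
    exact add_le_add (blin_mono h (ha.1 hx)) (blin_mono h' (ha.1 hx))
  · intro b hb'
    refine add_le ((h.map_lub s hs hb a ha).2 ?_) ((h'.map_lub s hs hb a ha).2 ?_)
    · rintro _ ⟨x, hx, rfl⟩
      exact le_trans (by simp [add_eq_sup]) (hb' ⟨x, hx, rfl⟩)
    · rintro _ ⟨x, hx, rfl⟩
      exact le_trans (by simp [add_eq_sup]) (hb' ⟨x, hx, rfl⟩)

variable (K V) in
/-- Pairs of a functional and a vector under the identity. -/
def PP : Set ((V → K) × V) := {p | IsBLinearMap K p.1 ∧ ∀ u, p.1 u • p.2 ≤ u}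

/-- component -/
def ff (χ : V → K) (m : (V → K) × V) : V → K := fun v => m.1 v * χ m.2

/-- support -/
def Supp (χ : V → K) (M : Set ((V → K) × V)) : Prop :=
  ∀ v, IsLUB ((fun m => ff χ m v) '' M) (χ v)

theorem ff_le {χ : V → K} (hχ : IsBLinearMap K χ) {m : (V → K) × V} (hm : m ∈ PP K V) (v : V) :
    ff χ m v ≤ χ v := by
  have := blin_mono hχ (hm.2 v)
  rwa [hχ.map_smul, smul_eq_mul] at this

theorem pp_lub (hid : IsBNuclearMap K (id : V → V)) (v : V) :
    IsLUB ((fun m : (V → K) × V => m.1 v • m.2) '' PP K V) v := by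
  obtain ⟨G, hG, hl⟩ := hid
  refine ⟨?_, ?_⟩
  · rintro _ ⟨m, hm, rfl⟩
    exact hm.2 v
  · intro b hb
    refine (hl v).2.2 ?_
    rintro _ ⟨g, hg, rfl⟩
    obtain ⟨φ, w, hφ, e⟩ := hG g hg
    have hm : (φ, w) ∈ PP K V := by
      refine ⟨hφ, fun u => ?_⟩
      have := (hl u).2.1 ⟨g, hg, rfl⟩
      simpa only [e, id] using this
    have := hb ⟨_, hm, rfl⟩
    simpa only [e] using this

theorem zero_blin : IsBLinearMap K (fun _ : V => (0 : K)) := by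
  refine ⟨fun k v => by simp, fun s hs _ a _ => ?_⟩
  rw [hs.image_const]
  exact isLUB_singleton

theorem pp_nonempty (hV : IsBCompleteSemimodule K V) : (PP K V).Nonempty :=
  ⟨(fun _ => 0, 0), zero_blin, fun u => by simpa using bs_zero_le hV u⟩

theorem pp_supp (hV : IsBCompleteSemimodule K V) (hid : IsBNuclearMap K (id : V → V))
    {χ : V → K} (hχ : IsBLinearMap K χ) : Supp χ (PP K V) := by
  intro v
  have h := pp_lub hid v
  have := hχ.map_lub _ ((pp_nonempty hV).image _) ⟨v, h.1⟩ v h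
  rw [Set.image_image] at this
  simpa only [hχ.map_smul, smul_eq_mul, ff] using this

theorem min_supp (hV : IsBCompleteSemimodule K V) (hid : IsBNuclearMap K (id : V → V))
    (χ : V → K) : ∃ M ⊆ PP K V, (IsBLinearMap K χ → Supp χ M ∧
      ∀ M' ⊆ PP K V, Supp χ M' → #M ≤ #M') ∧ (¬ IsBLinearMap K χ → M = ∅) := by
  by_cases hχ : IsBLinearMap K χ
  · obtain ⟨M, ⟨h1, h2⟩, h3⟩ := (InvImage.wf (fun M : Set ((V → K) × V) => #M)
      Cardinal.lt_wf).has_min {M | M ⊆ PP K V ∧ Supp χ M} ⟨_, subset_rfl, pp_supp hV hid hχ⟩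
    exact ⟨M, h1, fun _ => ⟨h2, fun M' a b => not_lt.1 (h3 M' ⟨a, b⟩)⟩, fun h => absurd hχ h⟩
  · exact ⟨∅, Set.empty_subset _, fun h => absurd h hχ, fun _ => rfl⟩

/-- pool -/
def ppool (M : (V → K) → Set ((V → K) × V)) (χ : V → K) (m0 : (V → K) × V) : Set (V → K) :=
  (fun m => fun v => ff χ m0 v + ff χ m v) '' M χ

theorem pool_big (χ : V → K) (M : (V → K) → Set ((V → K) × V)) (hMP : M χ ⊆ PP K V)
    (hS : Supp χ (M χ)) (hmin : ∀ M' ⊆ PP K V, Supp χ M' → #(M χ) ≤ #M')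
    (hinf : (M χ).Infinite) (m0 : (V → K) × V) (hm0 : m0 ∈ M χ) :
    #(M χ) ≤ #(ppool M χ m0) := by
  by_contra hlt
  rw [not_le] at hlt
  have hsec : ∀ p : ppool M χ m0, ∃ m ∈ M χ, (fun v => ff χ m0 v + ff χ m v) = p.1 := fun p => p.2
  choose s hs hs' using hsec
  have hsub : insert m0 (Set.range s) ⊆ M χ := by
    rintro x (rfl | ⟨p, rfl⟩)
    · exact hm0
    · exact hs p
  have hcard : #(insert m0 (Set.range s) : Set ((V → K) × V)) < #(M χ) := by
    have hi : ℵ₀ ≤ #(M χ) := infinite_iff.1 hinf.to_subtype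
    refine lt_of_le_of_lt mk_insert_le (add_lt_of_lt hi ?_ (one_lt_aleph0.trans_le hi))
    exact lt_of_le_of_lt mk_range_le hlt
  refine absurd (hmin _ (hsub.trans hMP) ?_) (not_le.2 hcard)
  intro v
  refine ⟨?_, ?_⟩
  · rintro _ ⟨m, hm, rfl⟩
    exact (hS v).1 ⟨m, hsub hm, rfl⟩
  · intro b hb
    refine (hS v).2 ?_
    rintro _ ⟨m, hm, rfl⟩
    let p : ppool M χ m0 := ⟨_, m, hm, rfl⟩
    have e := congrFun (hs' p) v
    have h1 : ff χ m v ≤ ff χ m0 v + ff χ m v := by simp [add_eq_sup]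
    refine h1.trans ?_
    change p.1 v ≤ b
    rw [← e]
    exact add_le (hb ⟨m0, Or.inl rfl, rfl⟩) (hb ⟨s p, Or.inr ⟨p, rfl⟩, rfl⟩)

theorem exists_kernel (hK : IsBCompleteSemiring K) (hV : IsBCompleteSemimodule K V)
    (hid : IsBNuclearMap K (id : V → V)) :
    ∃ k : (V → K) → V, (∀ ρ u, ρ u • k ρ ≤ u) ∧
      ∀ v b, (∀ ρ, IsDeltaFunctional K ρ → ρ v • k ρ ≤ b) → v ≤ b := by
  classical
  choose M hMP hMs hMe using fun χ : V → K => min_supp hV hid χ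
  obtain ⟨D, hDP, hDf, hDh⟩ := comb (Φ := V → K) (S := (V → K) × V) Prod.fst M (ppool M)
    (fun m g => (g, m.2)) (fun m g => rfl) (by
      intro χ hinf m hm
      have hχ : IsBLinearMap K χ := by
        by_contra h
        rw [hMe χ h] at hinf
        exact hinf Set.finite_empty
      exact pool_big χ M (hMP χ) (hMs χ hχ).1 (hMs χ hχ).2 hinf m hm)
    (fun χ m _ => mk_image_le) _ (PP K V) rfl
  refine ⟨fun ρ => ∑ m ∈ (hDf ρ).toFinset, m.2, ?_, ?_⟩
  · intro ρ u
    simp only [Finset.smul_sum]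
    refine bs_sum_le hV _ _ _ fun m hm => ?_
    obtain ⟨h1, rfl⟩ := (Set.Finite.mem_toFinset _).1 hm
    exact (hDP h1).2 u
  · intro v b hb
    refine (pp_lub hid v).2 ?_
    rintro _ ⟨m0, hm0, rfl⟩
    by_contra hcon
    obtain ⟨x, ⟨hxP, hxb⟩, hxD⟩ := hDh {m | m ∈ PP K V ∧ ¬ m.1 v • m.2 ≤ b} (fun m hm => hm.1)
      ⟨m0, hm0, hcon⟩ (by
      rintro ⟨χ, y⟩ ⟨⟨hχ, hy⟩, hb'⟩
      simp only at hχ hy hb'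
      have hS := (hMs χ hχ).1 v
      have hne : (M χ).Nonempty := by
        by_contra h
        rw [Set.not_nonempty_iff_eq_empty.1 h, Set.image_empty] at hS
        have h0 : χ v ≤ 0 := hS.2 (by simp)
        apply hb'
        refine (bs_act_mono hV y h0).trans ?_
        rw [zero_smul]
        exact bs_zero_le hV b
      have hL := hV.act_lub y _ _ (hne.image _) ⟨_, hS.1⟩ hS
      have : ∃ m' ∈ M χ, ¬ ff χ m' v • y ≤ b := by
        by_contra h
        push Not at h
        apply hb'
        refine hL.2 ?_
        rintro _ ⟨_, ⟨m, hm, rfl⟩, rfl⟩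
        exact h m hm
      obtain ⟨m', hm', hnb⟩ := this
      refine ⟨m', hm', ⟨hMP χ hm', fun h => hnb ?_⟩, ?_⟩
      · refine le_trans ?_ h
        simp only [ff, mul_smul]
        exact bs_smul_mono hV _ (hy m'.2)
      · rintro _ ⟨m'', hm'', rfl⟩
        refine ⟨⟨blin_add (blin_mul hK (hMP χ hm').1 _) (blin_mul hK (hMP χ hm'').1 _), ?_⟩, ?_⟩
        · intro u
          refine (bs_act_mono hV y ?_).trans (hy u)
          exact add_le (ff_le hχ (hMP χ hm') u) (ff_le hχ (hMP χ hm'') u)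
        · intro h
          refine hnb ((bs_act_mono hV y ?_).trans h)
          simp [add_eq_sup])
    apply hxb
    refine le_trans ?_ (hb x.1 ⟨hxP.1, x.2, hxP.2⟩)
    refine bs_smul_mono hV _ ?_
    exact bs_le_sum hV _ Prod.snd ((Set.Finite.mem_toFinset _).2 ⟨hxD, rfl⟩)

end Alg

/-- **Proposition 4.** Let `V` be a b-complete semimodule over a b-complete idempotent
semiring `K`, `Δ(V)` the set of δ-functionals on `V` and `i_Δ : V → K(Δ(V))` the natural
map `(i_Δ v) φ = φ v`. Then the identity operator of `V` is b-nuclear iff `i_Δ` is an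
embedding (injective and an order isomorphism onto its image `i_Δ(V)`) and the identity
operator of `i_Δ(V)` is integral. -/
theorem id_bNuclear_iff_iDelta_embedding_and_Id_integral {K : Type*} [IdemSemiring K]
    {V : Type*} [AddCommMonoid V] [PartialOrder V] [Module K V]
    (hK : IsBCompleteSemiring K) (hV : IsBCompleteSemimodule K V) :
    IsBNuclearMap K (id : V → V) ↔
      ((Function.Injective (iDelta K V) ∧
          ∀ v w : V, iDelta K V v ≤ iDelta K V w ↔ v ≤ w) ∧
        IsIntegralSelf (Set.range (iDelta K V)) (fun F => F)) := by
  constructor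
  · intro hid
    obtain ⟨k, hk1, hk2⟩ := exists_kernel hK hV hid
    have hord : ∀ v w : V, iDelta K V v ≤ iDelta K V w ↔ v ≤ w := by
      intro v w
      constructor
      · intro h
        refine hk2 v w fun ρ hρ => ?_
        exact (bs_act_mono hV _ (h ⟨ρ, hρ⟩)).trans (hk1 ρ w)
      · intro h φ
        exact blin_mono φ.2.1 h
    refine ⟨⟨fun v w h => le_antisymm ((hord v w).1 h.le) ((hord w v).1 h.ge), hord⟩, ?_⟩
    have hsm : ∀ (v : V) (φ : DeltaSet K V),
        iDelta K V v φ • iDelta K V (k φ.1) = iDelta K V (φ.1 v • k φ.1) := by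
      intro v φ
      funext ψ
      exact (ψ.2.1.map_smul _ _).symm
    refine ⟨fun φ => iDelta K V (k φ.1), fun φ => ⟨_, rfl⟩, ?_⟩
    rintro _ ⟨v, rfl⟩
    refine ⟨⟨v, rfl⟩, ?_, ?_⟩
    · rintro _ ⟨φ, rfl⟩
      simp only [hsm]
      exact (hord _ _).2 (hk1 _ _)
    · rintro _ ⟨b, rfl⟩ hb
      refine (hord _ _).2 (hk2 v b fun ρ hρ => (hord _ _).1 ?_)
      have h3 := hb ⟨⟨ρ, hρ⟩, rfl⟩
      exact (hsm v ⟨ρ, hρ⟩).symm.le.trans h3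
  · rintro ⟨⟨-, hord⟩, k, hk, hint⟩
    choose w hw using hk
    have hsm : ∀ (v : V) (φ : DeltaSet K V),
        iDelta K V v φ • k φ = iDelta K V (φ.1 v • w φ) := by
      intro v φ
      rw [← hw φ]
      funext ψ
      exact (ψ.2.1.map_smul _ _).symm
    refine ⟨Set.range fun φ : DeltaSet K V => fun v => φ.1 v • w φ, ?_, ?_⟩
    · rintro _ ⟨φ, rfl⟩
      exact ⟨φ.1, w φ, φ.2.1, fun v => rfl⟩
    · intro v
      obtain ⟨-, h1, h2⟩ := hint _ ⟨v, rfl⟩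
      have hl : IsLUB ((fun g : V → V => g v) ''
          Set.range fun φ : DeltaSet K V => fun v => φ.1 v • w φ) v := by
        refine ⟨?_, ?_⟩
        · rintro _ ⟨_, ⟨φ, rfl⟩, rfl⟩
          have := h1 ⟨φ, rfl⟩
          simp only [hsm] at this
          exact (hord _ _).1 this
        · intro b hb
          refine (hord _ _).1 (h2 _ ⟨b, rfl⟩ ?_)
          rintro _ ⟨φ, rfl⟩
          simp only [hsm]
          exact (hord _ _).2 (hb ⟨_, ⟨φ, rfl⟩, rfl⟩)
      exact ⟨⟨v, hl.1⟩, hl⟩
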